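/- Every connected nonempty 1-dimensional topological manifold with boundary is homeomorphic to exactly one of: ℝ, the circle S¹, the half-line [0,∞), or the closed interval [0,1]. -/

import Mathlib

/-!
An injective path in a one-dimensional manifold is open away from the ends of its parameter
interval, by the intermediate value theorem in a chart. Take a maximal arc `f` in `X`, parametrized
by a bounded interval `J`. If `f` accumulates at a point `x` as the parameter tends to a missing end
of `J`, then it converges to `x`: small neighbourhoods of `x` have finite frontier, which an
injective path meets finitely often. By maximality `x` lies on the arc, and by openness it can only
be the opposite end, so that the arc closes up to a circle, which is all of `X` by connectedness. If
this never happens, then `f` is a closed map; a point of its image which is not interior would let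
the arc be prolonged from an end of `J`, so the image is clopen and `X` is homeomorphic to `J`.
-/

namespace OneManifold

open Set Filter Topology TopologicalSpace
open scoped NNReal

section InvarianceOfDomain

variable {α : Type*} [ConditionallyCompleteLinearOrder α] [TopologicalSpace α]
  [OrderTopology α] [DenselyOrdered α]

theorem image_Icc_mem_nhds_of_injOn {H : Type*} [LinearOrder H] [TopologicalSpace H]
    [OrderTopology H] {f : α → H} {u t v : α} (hut : u < t) (htv : t < v)
    (hf : ContinuousOn f (Icc u v)) (hinj : InjOn f (Icc u v)) : f '' Icc u v ∈ 𝓝 (f t) := by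
  have huv := (hut.trans htv).le
  have ht : t ∈ Icc u v := ⟨hut.le, htv.le⟩
  obtain hmono | hanti := hf.strictMonoOn_of_injOn_Icc' huv hinj
  · exact mem_of_superset (Icc_mem_nhds (hmono (left_mem_Icc.2 huv) ht hut)
      (hmono ht (right_mem_Icc.2 huv) htv)) (intermediate_value_Icc huv hf)
  · exact mem_of_superset (Icc_mem_nhds (hanti ht (right_mem_Icc.2 huv) htv)
      (hanti (left_mem_Icc.2 huv) ht hut)) (intermediate_value_Icc' huv hf)

variable [NoMinOrder α] [NoMaxOrder α] {X : Type*} [TopologicalSpace X]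

theorem image_mem_nhds_of_injOn (H : Type*) [LinearOrder H] [TopologicalSpace H]
    [OrderTopology H] [ChartedSpace H X] {g : α → X} {s : Set α} {t : α}
    (hs : s ∈ 𝓝 t) (hg : ContinuousOn g s) (hinj : InjOn g s) : g '' s ∈ 𝓝 (g t) := by
  let e := chartAt H (g t)
  have hgt : g t ∈ e.source := mem_chart_source H (g t)
  obtain ⟨u, v, -, huv, hsub⟩ := exists_Icc_mem_subset_of_mem_nhds
    (inter_mem hs ((hg.continuousAt hs).preimage_mem_nhds (e.open_source.mem_nhds hgt)))
  obtain ⟨hus, hue⟩ := subset_inter_iff.1 hsub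
  obtain ⟨hut, htv⟩ := Icc_mem_nhds_iff.1 huv
  have himage : (e ∘ g) '' Icc u v ∈ 𝓝 (e (g t)) := image_Icc_mem_nhds_of_injOn hut htv
    (e.continuousOn.comp (hg.mono hus) hue) (e.injOn.comp (hinj.mono hus) hue)
  rw [← e.symm_map_nhds_eq hgt]
  refine mem_of_superset (image_mem_map himage) ?_
  rintro _ ⟨_, ⟨r, hr, rfl⟩, rfl⟩
  exact ⟨r, hus hr, (e.left_inv (hue hr)).symm⟩

theorem isOpen_image_of_injOn (H : Type*) [LinearOrder H] [TopologicalSpace H]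
    [OrderTopology H] [ChartedSpace H X] {g : α → X} {s : Set α} (hs : IsOpen s)
    (hg : ContinuousOn g s) (hinj : InjOn g s) : IsOpen (g '' s) :=
  isOpen_iff_mem_nhds.2 <| forall_mem_image.2 fun _ ht ↦
    image_mem_nhds_of_injOn H (hs.mem_nhds ht) hg hinj

end InvarianceOfDomain

section EndLimit

variable {X : Type*} [TopologicalSpace X] {x : X}

theorem hasBasis_nhds_finite_frontier (H : Type*) [LinearOrder H] [TopologicalSpace H]
    [OrderTopology H] [CompactIccSpace H] [T2Space X] [ChartedSpace H X] (x : X) :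
    (𝓝 x).HasBasis (fun N ↦ N ∈ 𝓝 x ∧ (frontier N).Finite) id := by
  refine ⟨fun U ↦ ⟨fun hU ↦ ?_, fun ⟨N, ⟨hN, _⟩, hNU⟩ ↦ mem_of_superset hN hNU⟩⟩
  let e := chartAt H x
  have hx : x ∈ e.source := mem_chart_source H x
  have hU' : e.symm ⁻¹' U ∩ e.target ∈ 𝓝 (e x) :=
    inter_mem ((e.tendsto_symm hx) hU) (e.open_target.mem_nhds (e.map_source hx))
  obtain ⟨b, c, -, hbc, hsub⟩ := exists_Icc_mem_subset_of_mem_nhds hU'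
  obtain ⟨hbcU, hbct⟩ := subset_inter_iff.1 hsub
  have hopen : IsOpen (e.symm '' Ioo b c) :=
    e.symm.isOpen_image_of_subset_source isOpen_Ioo (Ioo_subset_Icc_self.trans hbct)
  have hclosed : IsClosed (e.symm '' Icc b c) :=
    (isCompact_Icc.image_of_continuousOn (e.continuousOn_symm.mono hbct)).isClosed
  refine ⟨e.symm '' Icc b c, ⟨?_, (toFinite {e.symm b, e.symm c}).subset ?_⟩, ?_⟩
  · exact e.symm_map_nhds_eq hx ▸ image_mem_map hbc
  · rw [hclosed.frontier_eq]
    rintro _ ⟨⟨r, hr, rfl⟩, hrint⟩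
    obtain rfl | rfl | hr' := eq_endpoints_or_mem_Ioo_of_mem_Icc hr
    · exact mem_insert _ _
    · exact mem_insert_of_mem _ rfl
    · exact absurd (interior_maximal (image_mono Ioo_subset_Icc_self) hopen
        (mem_image_of_mem _ hr')) hrint
  · exact image_subset_iff.2 hbcU

theorem tendsto_nhdsLT_of_mapClusterPt {α : Type*} [ConditionallyCompleteLinearOrder α]
    [TopologicalSpace α] [OrderTopology α] [DenselyOrdered α]
    (hx : (𝓝 x).HasBasis (fun N ↦ N ∈ 𝓝 x ∧ (frontier N).Finite) id)
    {g : α → X} {a b : α} (hab : a < b) (hg : ContinuousOn g (Ico a b)) (hinj : InjOn g (Ico a b))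
    (hcluster : MapClusterPt x (𝓝[<] b) g) : Tendsto g (𝓝[<] b) (𝓝 x) := by
  refine hx.tendsto_right_iff.2 fun N ⟨hN, hfin⟩ ↦ ?_
  have havoid : ∀ᶠ t in 𝓝[<] b, t ∈ Ico a b ∧ g t ∉ frontier N := by
    have hhit : {t ∈ Ico a b | g t ∈ frontier N}.Finite :=
      .of_finite_image (hfin.subset (image_subset_iff.2 fun t ht ↦ ht.2))
        (hinj.mono fun t ht ↦ ht.1)
    filter_upwards [Ico_mem_nhdsLT hab,
      nhdsWithin_le_nhds (hhit.isClosed.isOpen_compl.mem_nhds fun h ↦ h.1.2.false)]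
      with t ht ht' using ⟨ht, fun h ↦ ht' ⟨ht, h⟩⟩
  obtain ⟨d, hdb, hd⟩ := (mem_nhdsLT_iff_exists_Ioo_subset' hab).1 havoid
  have hconn : IsPreconnected (g '' Ioo d b) :=
    isPreconnected_Ioo.image g (hg.mono fun t ht ↦ (hd ht).1)
  have hmeet : (g '' Ioo d b ∩ interior N).Nonempty := by
    obtain ⟨t, htN, ht⟩ := ((mapClusterPt_iff_frequently.1 hcluster _
      (interior_mem_nhds.2 hN)).and_eventually (Ioo_mem_nhdsLT hdb)).exists
    exact ⟨g t, mem_image_of_mem g ht, htN⟩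
  have hsub : g '' Ioo d b ⊆ interior N := by
    refine hconn.subset_of_closure_inter_subset isOpen_interior hmeet ?_
    rintro _ ⟨hcl, t, ht, rfl⟩
    by_contra hint
    exact (hd ht).2 ⟨closure_mono interior_subset hcl, hint⟩
  filter_upwards [Ioo_mem_nhdsLT hdb] with t ht using interior_subset (hsub (mem_image_of_mem g ht))

end EndLimit

section Circle

variable {X : Type*} [TopologicalSpace X] [T2Space X] [ConnectedSpace X]

theorem isHomeomorph_of_continuous_injective_addCircle (H : Type*) [LinearOrder H]
    [TopologicalSpace H] [OrderTopology H] [ChartedSpace H X] {p : ℝ} [hp : Fact (0 < p)]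
    {F : AddCircle p → X} (hF : Continuous F) (hinj : Function.Injective F) : IsHomeomorph F := by
  have hopen : IsOpen (range F) := by
    refine isOpen_iff_mem_nhds.2 (forall_mem_range.2 fun z ↦ ?_)
    induction z using QuotientAddGroup.induction_on with | H t => ?_
    have hIoo : Ioo (t - p / 2) (t - p / 2 + p) ∈ 𝓝 t :=
      Ioo_mem_nhds (by linarith [hp.out]) (by linarith [hp.out])
    have hlift : InjOn (fun s : ℝ ↦ F s) (Ioo (t - p / 2) (t - p / 2 + p)) := fun r hr s hs h ↦
      (AddCircle.coe_eq_coe_iff_of_mem_Ico (Ioo_subset_Ico_self hr) (Ioo_subset_Ico_self hs)).1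
        (hinj h)
    exact mem_of_superset (image_mem_nhds_of_injOn H (g := fun s : ℝ ↦ F s) hIoo
      (hF.comp (AddCircle.continuous_mk' p)).continuousOn hlift)
      (image_subset_iff.2 fun s _ ↦ mem_range_self _)
  have hsurj : range F = univ :=
    IsClopen.eq_univ ⟨(isCompact_range hF).isClosed, hopen⟩ (range_nonempty F)
  exact isHomeomorph_iff_continuous_bijective.2 ⟨hF, hinj, range_eq_univ.1 hsurj⟩

theorem nonempty_homeomorph_circle_of_injOn_Ico (H : Type*) [LinearOrder H]
    [TopologicalSpace H] [OrderTopology H] [ChartedSpace H X] {g : ℝ → X} {a b : ℝ} (hab : a < b)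
    (hg : ContinuousOn g (Icc a b)) (hinj : InjOn g (Ico a b)) (hclosed : g b = g a) :
    Nonempty (X ≃ₜ Circle) := by
  obtain ⟨p, rfl⟩ : ∃ p, b = a + p := ⟨b - a, by ring⟩
  have : Fact (0 < p) := ⟨by linarith⟩
  have hF : Continuous (AddCircle.liftIco p a g) := AddCircle.liftIco_continuous hclosed.symm hg
  have hFinj : Function.Injective (AddCircle.liftIco p a g) := by
    intro y z hyz
    obtain ⟨r, hr, rfl⟩ : y ∈ ((↑) : ℝ → AddCircle p) '' Ico a (a + p) :=
      (AddCircle.coe_image_Ico_eq p a).symm ▸ mem_univ y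
    obtain ⟨s, hs, rfl⟩ : z ∈ ((↑) : ℝ → AddCircle p) '' Ico a (a + p) :=
      (AddCircle.coe_image_Ico_eq p a).symm ▸ mem_univ z
    rw [AddCircle.liftIco_coe_apply hr, AddCircle.liftIco_coe_apply hs] at hyz
    rw [hinj hr hs hyz]
  exact ⟨(isHomeomorph_of_continuous_injective_addCircle H hF hFinj).homeomorph.symm.trans
    (AddCircle.homeomorphCircle (Fact.out : 0 < p).ne')⟩

end Circle

section DenseWeight

variable {X : Type*} [TopologicalSpace X] [SeparableSpace X] [Nonempty X] {A B O : Set X}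

/-- The total mass of `A` for the purely atomic measure giving mass `2⁻ⁿ` to the `n`-th term of a
dense sequence. It measures the size of an arc by its image alone, and strictly grows when the arc
is prolonged by a nonempty open set. -/
noncomputable def denseWeight (A : Set X) : ℝ :=
  ∑' n, (denseSeq X ⁻¹' A).indicator (fun n ↦ (1 / 2 : ℝ) ^ n) n

theorem denseWeight_nonneg : 0 ≤ denseWeight A :=
  tsum_nonneg fun n ↦ indicator_nonneg (fun n _ ↦ by positivity) n

theorem denseWeight_mono (h : A ⊆ B) : denseWeight A ≤ denseWeight B :=
  (summable_geometric_two.indicator _).tsum_le_tsum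
    (indicator_le_indicator_of_subset (preimage_mono h) fun n ↦ by positivity)
    (summable_geometric_two.indicator _)

theorem denseWeight_lt_of_isOpen_subset_diff (h : A ⊆ B) (hO : IsOpen O) (hne : O.Nonempty)
    (hOB : O ⊆ B \ A) : denseWeight A < denseWeight B := by
  obtain ⟨n, hn⟩ := (denseRange_denseSeq X).exists_mem_open hO hne
  refine (summable_geometric_two.indicator _).tsum_lt_tsum (i := n)
    (indicator_le_indicator_of_subset (preimage_mono h) fun n ↦ by positivity) ?_
    (summable_geometric_two.indicator _)
  rw [indicator_of_notMem (show n ∉ denseSeq X ⁻¹' A from (hOB hn).2),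
    indicator_of_mem (show n ∈ denseSeq X ⁻¹' B from (hOB hn).1)]
  positivity

end DenseWeight

section OrdConnected

variable {α Y : Type*} [LinearOrder α] [TopologicalSpace α] [OrderTopology α] [TopologicalSpace Y]

theorem exists_Icc_mem_nhdsWithin_of_ordConnected {J : Set α} [J.OrdConnected] {a : α}
    (ha : a ∈ J) : ∃ s ∈ J, ∃ t ∈ J, Icc s t ∈ 𝓝[J] a := by
  obtain ⟨s, t, -, hst, -⟩ := exists_Icc_mem_subset_of_mem_nhds (a := (⟨a, ha⟩ : J)) univ_mem
  exact ⟨s, s.2, t, t.2, (preimage_coe_mem_nhds_subtype (a := ⟨a, ha⟩)).1 hst⟩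

theorem continuousOn_of_forall_continuousOn_Icc {J : Set α} [J.OrdConnected] {g : α → Y}
    (hg : ∀ s ∈ J, ∀ t ∈ J, ContinuousOn g (Icc s t)) : ContinuousOn g J := by
  intro a ha
  obtain ⟨s, hs, t, ht, hst⟩ := exists_Icc_mem_nhdsWithin_of_ordConnected ha
  refine ContinuousWithinAt.mono_of_mem_nhdsWithin (hg s hs t ht a ?_) hst
  exact mem_of_mem_nhdsWithin ha hst

theorem isGreatest_or_isLeast_of_notMem_nhds {J : Set α} [J.OrdConnected] {t : α}
    (ht : t ∈ J) (hJ : J ∉ 𝓝 t) : IsGreatest J t ∨ IsLeast J t := by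
  contrapose! hJ
  obtain ⟨u, hu, htu⟩ : ∃ u ∈ J, t < u := by simpa [IsGreatest, ht, upperBounds] using hJ.1
  obtain ⟨s, hs, hst⟩ : ∃ s ∈ J, s < t := by simpa [IsLeast, ht, lowerBounds] using hJ.2
  exact mem_of_superset (Icc_mem_nhds hst htu) (OrdConnected.out ‹_› hs hu)

theorem continuous_symm_of_isClosed_image (e : α ≃ Y) (hIic : ∀ c, IsClosed (e '' Iic c))
    (hIci : ∀ c, IsClosed (e '' Ici c)) : Continuous e.symm := by
  refine OrderTopology.continuous_iff.2 fun c ↦ ⟨?_, ?_⟩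
  · rw [← compl_Iic, preimage_compl, ← e.image_eq_preimage_symm]
    exact (hIic c).isOpen_compl
  · rw [← compl_Ici, preimage_compl, ← e.image_eq_preimage_symm]
    exact (hIci c).isOpen_compl

end OrdConnected

section Path

theorem exists_last_exit {α Y : Type*} [LinearOrder α] [TopologicalSpace α] [OrderTopology α]
    [CompactIccSpace α] [TopologicalSpace Y] {K : Set Y} (hK : IsClosed K) {a b : α}
    (hab : a ≤ b) {q : α → Y} (hq : ContinuousOn q (Icc a b)) (ha : q a ∈ K)
    (hb : q b ∉ K) : ∃ s ∈ Ico a b, q s ∈ K ∧ ∀ t ∈ Ioc s b, q t ∉ K := by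
  have hcompact : IsCompact (Icc a b ∩ q ⁻¹' K) :=
    isCompact_Icc.of_isClosed_subset (hq.preimage_isClosed_of_isClosed isClosed_Icc hK)
      inter_subset_left
  obtain ⟨s, ⟨hs, hsK⟩, hmax⟩ := hcompact.exists_isGreatest ⟨a, left_mem_Icc.2 hab, ha⟩
  have hsb : s ≠ b := fun h ↦ hb (h ▸ hsK)
  exact ⟨s, ⟨hs.1, hs.2.lt_of_ne hsb⟩, hsK, fun t ht htK ↦
    (hmax ⟨⟨hs.1.trans ht.1.le, ht.2⟩, htK⟩).not_gt ht.1⟩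

theorem exists_path_of_notMem_nhds {X : Type*} [TopologicalSpace X] [ChartedSpace ℝ≥0 X]
    {A : Set X} {p : X} (hp : p ∈ A) (hA : A ∉ 𝓝 p) :
    ∃ q : ℝ → X, ContinuousOn q (Icc 0 1) ∧ InjOn q (Icc 0 1) ∧ q 0 = p ∧ q 1 ∉ A := by
  let e := chartAt ℝ≥0 p
  have hpe : p ∈ e.source := mem_chart_source ℝ≥0 p
  obtain ⟨b, c, hpbc, hbc, hbct⟩ :=
    exists_Icc_mem_subset_of_mem_nhds (e.open_target.mem_nhds (e.map_source hpe))
  obtain ⟨y, hy, hyA⟩ : ∃ y ∈ Icc b c, e.symm y ∉ A := by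
    by_contra! hsub
    exact hA (mem_of_superset (e.symm_map_nhds_eq hpe ▸ image_mem_map hbc)
      (image_subset_iff.2 hsub))
  have hne : e p ≠ y := by
    rintro rfl
    exact hyA ((e.left_inv hpe).symm ▸ hp)
  let φ : ℝ → ℝ := AffineMap.lineMap (e p : ℝ) (y : ℝ)
  have hφ : MapsTo φ (Icc 0 1) (Icc (b : ℝ) c) := fun s hs ↦
    (convex_Icc (b : ℝ) c).lineMap_mem hpbc hy hs
  have hmaps : MapsTo (Real.toNNReal ∘ φ) (Icc 0 1) e.target := fun s hs ↦
    hbct ⟨NNReal.le_toNNReal_of_coe_le (hφ hs).1, Real.toNNReal_le_iff_le_coe.2 (hφ hs).2⟩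
  have hinj : InjOn (Real.toNNReal ∘ φ) (Icc 0 1) := by
    intro s hs t ht hst
    have : φ s = φ t := (Real.toNNReal_eq_toNNReal_iff (b.2.trans (hφ hs).1)
      (b.2.trans (hφ ht).1)).1 hst
    exact AffineMap.lineMap_injective ℝ (NNReal.coe_injective.ne hne) this
  refine ⟨e.symm ∘ Real.toNNReal ∘ φ, ?_, e.symm.injOn.comp hinj hmaps, ?_, ?_⟩
  · refine e.continuousOn_symm.comp (Continuous.continuousOn ?_) hmaps
    exact continuous_real_toNNReal.comp AffineMap.lineMap_continuous
  · simp [φ, e.left_inv hpe]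
  · simpa [φ] using hyA

end Path

section Paste

variable {α Y : Type*} [LinearOrder α] {f r : α → Y} {J : Set α} {b b' : α}

theorem union_Icc_eq_union_Ioc (hb : b ∈ J) (hbb' : b ≤ b') : J ∪ Icc b b' = J ∪ Ioc b b' := by
  rw [← Ioc_insert_left hbb', union_insert, insert_eq_of_mem (mem_union_left _ hb)]

theorem injOn_ite_le (hb : IsGreatest J b) (hbb' : b ≤ b') (hf : InjOn f J)
    (hr : InjOn r (Icc b b')) (havoid : ∀ t ∈ Ioc b b', r t ∉ f '' J) :
    InjOn (fun t ↦ if t ≤ b then f t else r t) (J ∪ Icc b b') := by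
  have hfJ : EqOn (fun t ↦ if t ≤ b then f t else r t) f J := fun t ht ↦ if_pos (hb.2 ht)
  have hrIoc : EqOn (fun t ↦ if t ≤ b then f t else r t) r (Ioc b b') := fun t ht ↦
    if_neg ht.1.not_ge
  rw [union_Icc_eq_union_Ioc hb.1 hbb',
    injOn_union (disjoint_left.2 fun t ht ht' ↦ (hb.2 ht).not_gt ht'.1)]
  refine ⟨hf.congr hfJ.symm, (hr.mono Ioc_subset_Icc_self).congr hrIoc.symm, fun s hs t ht h ↦ ?_⟩
  exact havoid t ht ⟨s, hs, (hfJ hs).symm.trans (h.trans (hrIoc ht))⟩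

theorem continuousOn_ite_le [TopologicalSpace α] [OrderTopology α] [DenselyOrdered α]
    [NoMaxOrder α] [TopologicalSpace Y] (hb : IsGreatest J b) (hbb' : b ≤ b')
    (hf : ContinuousOn f J) (hr : ContinuousOn r (Icc b b'))
    (hfr : f b = r b) : ContinuousOn (fun t ↦ if t ≤ b then f t else r t) (J ∪ Icc b b') := by
  have hle : {t | t ≤ b} = Iic b := rfl
  have hgt : {t | ¬t ≤ b} = Ioi b := by simp only [not_le]; rfl
  refine ContinuousOn.if ?_ (hf.mono ?_) (hr.mono ?_)
  · rw [hle, frontier_Iic]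
    rintro t ⟨-, rfl⟩
    exact hfr
  · rw [hle, closure_Iic]
    rintro t ⟨ht | ht, htb⟩
    · exact ht
    · exact le_antisymm htb ht.1 ▸ hb.1
  · rw [hgt, closure_Ioi]
    rintro t ⟨ht | ht, hbt⟩
    · exact le_antisymm hbt (hb.2 ht) ▸ left_mem_Icc.2 hbb'
    · exact ht

end Paste

/-- An arc in `X`, parametrized by an order-connected set of reals. The length of the parameter set
is bounded by the weight of the image: the ends of the parameter set are then finite, so that an arc
which can be prolonged in `X` can be prolonged by enlarging its parameter set. The values of `toFun`
outside `carrier` are irrelevant. -/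
structure Arc (X : Type*) [TopologicalSpace X] [SeparableSpace X] [Nonempty X] where
  carrier : Set ℝ
  toFun : ℝ → X
  ordConnected : carrier.OrdConnected
  continuousOn : ContinuousOn toFun carrier
  injOn : InjOn toFun carrier
  sub_le_denseWeight :
    ∀ s ∈ carrier, ∀ t ∈ carrier, t - s ≤ denseWeight (toFun '' carrier)

namespace Arc

section Basic

variable {X : Type*} [TopologicalSpace X] [SeparableSpace X] [Nonempty X] {f g : Arc X}

instance : CoeFun (Arc X) fun _ ↦ ℝ → X := ⟨toFun⟩

instance (f : Arc X) : f.carrier.OrdConnected := f.ordConnected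

/-- The set of points of `X` on the arc. -/
def image (f : Arc X) : Set X := f '' f.carrier

theorem sub_le_denseWeight_image {s t : ℝ} (hs : s ∈ f.carrier) (ht : t ∈ f.carrier) :
    t - s ≤ denseWeight f.image :=
  f.sub_le_denseWeight s hs t ht

/-- `f ≤ g` if `g` prolongs `f`. This is not antisymmetric because of the values outside the
parameter sets. -/
instance : Preorder (Arc X) where
  le f g := f.carrier ⊆ g.carrier ∧ EqOn f g f.carrier
  le_refl _ := ⟨Subset.rfl, fun _ _ ↦ rfl⟩
  le_trans _ _ _ hfg hgh := ⟨hfg.1.trans hgh.1, hfg.2.trans (hgh.2.mono hfg.1)⟩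

theorem image_neg_preimage (f : Arc X) :
    (fun t ↦ f (-t)) '' (Neg.neg ⁻¹' f.carrier) = f.image := by
  rw [← image_image f, image_preimage_eq _ neg_surjective, image]

/-- The same arc run backwards. -/
def reverse (f : Arc X) : Arc X where
  carrier := Neg.neg ⁻¹' f.carrier
  toFun t := f (-t)
  ordConnected := f.ordConnected.preimage_anti fun _ _ ↦ neg_le_neg
  continuousOn := f.continuousOn.comp continuousOn_neg (mapsTo_preimage _ _)
  injOn := f.injOn.comp neg_injective.injOn (mapsTo_preimage _ _)
  sub_le_denseWeight s hs t ht := by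
    rw [image_neg_preimage]
    linarith [f.sub_le_denseWeight_image ht hs]

theorem reverse_reverse (f : Arc X) : f.reverse.reverse = f := by
  obtain ⟨J, g, _, _, _, _⟩ := f
  simp [reverse]

theorem image_reverse (f : Arc X) : f.reverse.image = f.image :=
  f.image_neg_preimage

theorem reverse_le_reverse (h : f ≤ g) : f.reverse ≤ g.reverse :=
  ⟨preimage_mono h.1, fun _ ht ↦ h.2 ht⟩

theorem isMax_reverse (hf : IsMax f) : IsMax f.reverse := fun g hg ↦
  g.reverse_reverse ▸ reverse_le_reverse (hf (f.reverse_reverse ▸ reverse_le_reverse hg))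

theorem bddAbove_carrier (f : Arc X) : BddAbove f.carrier := by
  obtain h | ⟨s, hs⟩ := f.carrier.eq_empty_or_nonempty
  · simp [h]
  · exact ⟨s + denseWeight f.image, fun t ht ↦ by
      linarith [f.sub_le_denseWeight_image hs ht]⟩

theorem bddBelow_carrier (f : Arc X) : BddBelow f.carrier := by
  simpa [reverse] using f.reverse.bddAbove_carrier

section Chain

variable {c : Set (Arc X)}

theorem exists_eqOn_of_isChain (hc : IsChain (· ≤ ·) c) :
    ∃ g : ℝ → X, ∀ f ∈ c, EqOn f g f.carrier := by
  have hval : ∀ t, ∃ x, ∀ f ∈ c, t ∈ f.carrier → f t = x := by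
    intro t
    by_cases h : ∃ f ∈ c, t ∈ f.carrier
    · obtain ⟨f, hf, htf⟩ := h
      exact ⟨f t, fun g hg htg ↦ (hc.total hg hf).elim (fun h ↦ h.2 htg) fun h ↦ (h.2 htf).symm⟩
    · exact ⟨Classical.arbitrary X, fun f hf htf ↦ absurd ⟨f, hf, htf⟩ h⟩
  choose g hg using hval
  exact ⟨g, fun f hf t ht ↦ hg t f hf ht⟩

theorem bddAbove_of_isChain (hc : IsChain (· ≤ ·) c) : BddAbove c := by
  obtain ⟨g, hg⟩ := exists_eqOn_of_isChain hc
  let J := ⋃ f ∈ c, f.carrier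
  have hJ : ∀ f ∈ c, f.carrier ⊆ J := fun f hf ↦ subset_biUnion_of_mem hf
  have hcommon : ∀ s ∈ J, ∀ t ∈ J, ∃ f ∈ c, s ∈ f.carrier ∧ t ∈ f.carrier := by
    intro s hs t ht
    obtain ⟨f₁, hf₁, hs⟩ := mem_iUnion₂.1 hs
    obtain ⟨f₂, hf₂, ht⟩ := mem_iUnion₂.1 ht
    obtain h | h := hc.total hf₁ hf₂
    · exact ⟨f₂, hf₂, h.1 hs, ht⟩
    · exact ⟨f₁, hf₁, hs, h.1 ht⟩
  have hJconn : J.OrdConnected := ⟨fun s hs t ht ↦ by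
    obtain ⟨f, hf, hsf, htf⟩ := hcommon s hs t ht
    exact (f.ordConnected.out hsf htf).trans (hJ f hf)⟩
  refine ⟨⟨J, g, hJconn, continuousOn_of_forall_continuousOn_Icc fun s hs t ht ↦ ?_,
    fun s hs t ht hst ↦ ?_, fun s hs t ht ↦ ?_⟩, fun f hf ↦ ⟨hJ f hf, hg f hf⟩⟩ <;>
  obtain ⟨f, hf, hsf, htf⟩ := hcommon s hs t ht
  · exact (f.continuousOn.congr (hg f hf).symm).mono (f.ordConnected.out hsf htf)
  · exact f.injOn hsf htf ((hg f hf hsf).trans (hst.trans (hg f hf htf).symm))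
  · refine (f.sub_le_denseWeight s hsf t htf).trans (denseWeight_mono ?_)
    exact (image_congr (hg f hf)).trans_subset (image_mono (hJ f hf))

end Chain

theorem exists_isMax : ∃ f : Arc X, IsMax f :=
  zorn_le fun _ ↦ bddAbove_of_isChain

end Basic

section Extension

variable {X : Type*} [TopologicalSpace X] [SeparableSpace X] [Nonempty X] {f : Arc X} {x : X}

theorem carrier_nonempty_of_isMax (hf : IsMax f) : f.carrier.Nonempty := by
  by_contra! hempty
  let point : Arc X := ⟨{0}, fun _ ↦ Classical.arbitrary X, ordConnected_singleton,
    continuousOn_const, injOn_singleton _ _, by simpa using denseWeight_nonneg⟩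
  have hle : f ≤ point := ⟨by simp [hempty], by simp [hempty]⟩
  simpa [hempty] using (hf hle).1 (mem_singleton (0 : ℝ))

/-- The arc has no last point and converges to `x` in the positive direction. -/
def HasRightLimit (f : Arc X) (x : X) : Prop :=
  ∃ b ∉ f.carrier, IsLUB f.carrier b ∧ Tendsto f (𝓝[<] b) (𝓝 x)

theorem mem_image_of_hasRightLimit (hf : IsMax f) (hx : f.HasRightLimit x) : x ∈ f.image := by
  obtain ⟨b, hbJ, hb, hlim⟩ := hx
  by_contra hximage
  let g := Function.update f b x
  have heq : EqOn g f f.carrier := fun t ht ↦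
    Function.update_of_ne (ne_of_mem_of_not_mem ht hbJ) _ _
  have himage : f.image ⊆ g '' insert b f.carrier :=
    heq.image_eq.symm.trans_subset (image_mono (subset_insert _ _))
  have hconn : (insert b f.carrier).OrdConnected :=
    (f.ordConnected.isPreconnected.subset_closure (subset_insert _ _) <| insert_subset
      (hb.mem_closure (carrier_nonempty_of_isMax hf)) subset_closure).ordConnected
  have hcont : ContinuousOn g (insert b f.carrier) := by
    refine continuousOn_update_iff.2 ⟨?_, fun _ ↦ ?_⟩ <;> rw [insert_sdiff_self_of_notMem hbJ]
    · exact f.continuousOn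
    · exact hlim.mono_left (nhdsWithin_mono b fun t ht ↦
        (hb.1 ht).lt_of_ne (ne_of_mem_of_not_mem ht hbJ))
  have hinj : InjOn g (insert b f.carrier) := by
    refine (injOn_insert hbJ).2 ⟨f.injOn.congr heq.symm, ?_⟩
    rwa [heq.image_eq, show g b = x from Function.update_self _ _ _]
  have hweight : ∀ s ∈ insert b f.carrier, ∀ t ∈ insert b f.carrier,
      t - s ≤ denseWeight (g '' insert b f.carrier) := by
    have hmono := denseWeight_mono himage
    have hW := denseWeight_nonneg (A := g '' insert b f.carrier)
    rintro s (rfl | hs) t (rfl | ht)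
    · linarith
    · linarith [hb.1 ht]
    · have : t ≤ s + denseWeight f.image := (isLUB_le_iff hb).2 fun u hu ↦ by
        linarith [f.sub_le_denseWeight_image hs hu]
      linarith
    · exact (f.sub_le_denseWeight_image hs ht).trans hmono
  let G : Arc X := ⟨insert b f.carrier, g, hconn, hcont, hinj, hweight⟩
  have hfG : f ≤ G := ⟨subset_insert _ _, heq.symm⟩
  exact hbJ ((hf hfG).1 (mem_insert _ _))

theorem not_isMax_of_isGreatest_of_le {b b' : ℝ} (hb : IsGreatest f.carrier b) (hbb' : b < b')
    {r : ℝ → X} (hr : ContinuousOn r (Icc b b')) (hinj : InjOn r (Icc b b')) (hfr : f b = r b)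
    (havoid : ∀ t ∈ Ioc b b', r t ∉ f.image)
    (hlength : b' - b ≤ denseWeight (f.image ∪ r '' Icc b b') - denseWeight f.image) :
    ¬IsMax f := by
  intro hf
  let g : ℝ → X := fun t ↦ if t ≤ b then f t else r t
  have hgf : EqOn g f f.carrier := fun t ht ↦ if_pos (hb.2 ht)
  have hgr : EqOn g r (Icc b b') := fun t ht ↦ ht.1.eq_or_lt.elim
    (fun h ↦ h ▸ (if_pos le_rfl).trans hfr) fun h ↦ if_neg h.not_ge
  have hconn : (f.carrier ∪ Icc b b').OrdConnected :=
    (f.ordConnected.isPreconnected.union b hb.1 (left_mem_Icc.2 hbb'.le)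
      isPreconnected_Icc).ordConnected
  have hweight : ∀ s ∈ f.carrier ∪ Icc b b', ∀ t ∈ f.carrier ∪ Icc b b',
      t - s ≤ denseWeight (g '' (f.carrier ∪ Icc b b')) := by
    rw [image_union, hgf.image_eq, hgr.image_eq, ← image]
    intro s hs t ht
    have hbs : b - s ≤ denseWeight f.image := hs.elim
      (fun hs ↦ f.sub_le_denseWeight_image hs hb.1)
      fun hs ↦ (sub_nonpos.2 hs.1).trans denseWeight_nonneg
    have htb' : t ≤ b' := ht.elim (fun ht ↦ (hb.2 ht).trans hbb'.le) fun ht ↦ ht.2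
    linarith
  let G : Arc X := ⟨f.carrier ∪ Icc b b', g, hconn,
    continuousOn_ite_le hb hbb'.le f.continuousOn hr hfr,
    injOn_ite_le hb hbb'.le f.injOn hinj havoid, hweight⟩
  have hfG : f ≤ G := ⟨subset_union_left, hgf.symm⟩
  have hb' : b' ∈ f.carrier := (hf hfG).1 (Or.inr (right_mem_Icc.2 hbb'.le))
  exact (hb.2 hb').not_gt hbb'

theorem not_isMax_of_isGreatest (H : Type*) [LinearOrder H] [TopologicalSpace H] [OrderTopology H]
    [ChartedSpace H X] {b s₀ s₁ : ℝ} (hb : IsGreatest f.carrier b) (hs : s₀ < s₁)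
    {q : ℝ → X} (hq : ContinuousOn q (Icc s₀ s₁)) (hinj : InjOn q (Icc s₀ s₁)) (hfq : f b = q s₀)
    (havoid : ∀ s ∈ Ioc s₀ s₁, q s ∉ f.image) : ¬IsMax f := by
  -- The path is reparametrized so that its length is the weight it adds to the image.
  let δ := denseWeight (f.image ∪ q '' Icc s₀ s₁) - denseWeight f.image
  have hδ : 0 < δ := by
    refine sub_pos.2 (denseWeight_lt_of_isOpen_subset_diff subset_union_left
      (isOpen_image_of_injOn H isOpen_Ioo (hq.mono Ioo_subset_Icc_self)
        (hinj.mono Ioo_subset_Icc_self)) ((nonempty_Ioo.2 hs).image q) (image_subset_iff.2 ?_))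
    exact fun s hs ↦ ⟨Or.inr (mem_image_of_mem q (Ioo_subset_Icc_self hs)),
      havoid s (Ioo_subset_Ioc_self hs)⟩
  let κ := (s₁ - s₀) / δ
  have hκ : 0 < κ := div_pos (sub_pos.2 hs) hδ
  let φ : ℝ → ℝ := fun t ↦ κ * t + (s₀ - κ * b)
  have hφb : φ b = s₀ := by simp only [φ]; ring
  have hφb' : φ (b + δ) = s₁ := by simp only [φ, κ]; field_simp; ring
  have hφ : φ '' Icc b (b + δ) = Icc s₀ s₁ := by
    rw [image_affine_Icc' hκ]
    exact congrArg₂ Icc hφb hφb'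
  have hmaps : MapsTo φ (Icc b (b + δ)) (Icc s₀ s₁) := mapsTo_iff_image_subset.2 hφ.subset
  have hmono : StrictMono φ := (strictMono_mul_left_of_pos hκ).add_const _
  refine not_isMax_of_isGreatest_of_le hb (lt_add_of_pos_right b hδ) (r := q ∘ φ)
    (hq.comp (by fun_prop) hmaps) (hinj.comp hmono.injective.injOn hmaps) (by simp [hφb, hfq]) ?_ ?_
  · exact fun t ht ↦ havoid (φ t) ⟨hφb ▸ hmono ht.1, (hmaps (Ioc_subset_Icc_self ht)).2⟩
  · rw [image_comp, hφ, add_sub_cancel_left]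

theorem not_isMax_of_path (H : Type*) [LinearOrder H] [TopologicalSpace H]
    [OrderTopology H] [ChartedSpace H X] {s₀ s₁ : ℝ} (hs : s₀ < s₁) {q : ℝ → X}
    (hq : ContinuousOn q (Icc s₀ s₁)) (hinj : InjOn q (Icc s₀ s₁)) (hq₀ : q s₀ ∈ f.image)
    (havoid : ∀ s ∈ Ioc s₀ s₁, q s ∉ f.image) : ¬IsMax f := by
  obtain ⟨t, ht, hft⟩ := hq₀
  have hJ : f.carrier ∉ 𝓝 t := by
    intro hJ
    have himage : f.image ∈ 𝓝 (q s₀) :=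
      hft ▸ image_mem_nhds_of_injOn H hJ f.continuousOn f.injOn
    have hnear : ∀ᶠ s in 𝓝[>] s₀, q s ∈ f.image :=
      ((hq s₀ (left_mem_Icc.2 hs.le)).mono_of_mem_nhdsWithin
        (Icc_mem_nhdsGT hs)).eventually_mem himage
    obtain ⟨s, hsimage, hs⟩ := (hnear.and (Ioc_mem_nhdsGT hs)).exists
    exact havoid s hs hsimage
  obtain hgreatest | hleast := isGreatest_or_isLeast_of_notMem_nhds ht hJ
  · exact not_isMax_of_isGreatest H hgreatest hs hq hinj hft havoid
  · intro hf
    have hgreatest : IsGreatest f.reverse.carrier (-t) :=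
      ⟨by simpa [reverse] using ht, fun s hs ↦ le_neg_of_le_neg (hleast.2 hs)⟩
    refine not_isMax_of_isGreatest H hgreatest hs hq hinj ?_ ?_ (isMax_reverse hf)
    · simpa [reverse] using hft
    · rwa [image_reverse]

end Extension

section RightLimit

variable {X : Type*} [TopologicalSpace X] [SeparableSpace X] [Nonempty X] {f : Arc X} {x : X}
  {b c : ℝ}

theorem lt_of_isLUB_of_notMem (hbJ : b ∉ f.carrier) (hb : IsLUB f.carrier b)
    (hc : c ∈ f.carrier) : c < b :=
  (hb.1 hc).lt_of_ne (ne_of_mem_of_not_mem hc hbJ)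

theorem Ico_subset_carrier (hb : IsLUB f.carrier b) (hc : c ∈ f.carrier) :
    Ico c b ⊆ f.carrier := by
  intro t ht
  obtain ⟨u, hu, htu⟩ := (lt_isLUB_iff hb).1 ht.2
  exact f.ordConnected.out hc hu ⟨ht.1, htu.le⟩

theorem carrier_inter_Ici_eq_Ico (hbJ : b ∉ f.carrier) (hb : IsLUB f.carrier b)
    (hc : c ∈ f.carrier) : f.carrier ∩ Ici c = Ico c b :=
  Subset.antisymm (fun _ ht ↦ ⟨ht.2, lt_of_isLUB_of_notMem hbJ hb ht.1⟩)
    fun _ ht ↦ ⟨Ico_subset_carrier hb hc ht, ht.1⟩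

theorem mapClusterPt_of_mem_closure [T2Space X] (hbJ : b ∉ f.carrier) (hb : IsLUB f.carrier b)
    (hc : c ∈ f.carrier) (hx : x ∈ closure (f '' (f.carrier ∩ Ici c)))
    (hx' : x ∉ f '' (f.carrier ∩ Ici c)) : MapClusterPt x (𝓝[<] b) f := by
  rw [carrier_inter_Ici_eq_Ico hbJ hb hc] at hx hx'
  have hJ := Ico_subset_carrier hb hc
  have hcb : c < b := lt_of_isLUB_of_notMem hbJ hb hc
  refine mapClusterPt_iff_frequently.2 fun U hU hev ↦ ?_
  obtain ⟨d, hd, hdU⟩ := (mem_nhdsLT_iff_exists_mem_Ico_Ioo_subset hcb).1 hev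
  have hsub : Icc c d ⊆ Ico c b := fun t ht ↦ ⟨ht.1, ht.2.trans_lt hd.2⟩
  have hclosed : IsClosed (f '' Icc c d) :=
    (isCompact_Icc.image_of_continuousOn (f.continuousOn.mono (hsub.trans hJ))).isClosed
  obtain ⟨_, ⟨hU', hfar⟩, t, ht, rfl⟩ := mem_closure_iff_nhds.1 hx _
    (inter_mem hU (hclosed.isOpen_compl.mem_nhds fun h ↦ hx' (image_mono hsub h)))
  exact hdU ⟨lt_of_not_ge fun htd ↦ hfar (mem_image_of_mem f ⟨ht.1, htd⟩), ht.2⟩ hU'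

theorem hasRightLimit_of_mem_closure [T2Space X]
    (hbasis : (𝓝 x).HasBasis (fun N ↦ N ∈ 𝓝 x ∧ (frontier N).Finite) id)
    (hc : c ∈ f.carrier) (hx : x ∈ closure (f '' (f.carrier ∩ Ici c)))
    (hx' : x ∉ f '' (f.carrier ∩ Ici c)) : f.HasRightLimit x := by
  obtain ⟨b, hb⟩ := Real.exists_isLUB ⟨c, hc⟩ f.bddAbove_carrier
  have hbJ : b ∉ f.carrier := by
    intro hbJ
    have hJ : f.carrier ∩ Ici c = Icc c b :=
      Subset.antisymm (fun t ht ↦ ⟨ht.2, hb.1 ht.1⟩)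
        fun t ht ↦ ⟨f.ordConnected.out hc hbJ ht, ht.1⟩
    have hclosed : IsClosed (f '' (f.carrier ∩ Ici c)) :=
      ((hJ ▸ isCompact_Icc).image_of_continuousOn (f.continuousOn.mono inter_subset_left)).isClosed
    exact hx' (hclosed.closure_subset hx)
  have hJ := Ico_subset_carrier hb hc
  exact ⟨b, hbJ, hb, tendsto_nhdsLT_of_mapClusterPt hbasis
    (lt_of_isLUB_of_notMem hbJ hb hc) (f.continuousOn.mono hJ) (f.injOn.mono hJ)
    (mapClusterPt_of_mem_closure hbJ hb hc hx hx')⟩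

theorem isLeast_of_hasRightLimit (H : Type*) [LinearOrder H] [TopologicalSpace H]
    [OrderTopology H] [ChartedSpace H X] (hc : c ∈ f.carrier) (hlim : f.HasRightLimit (f c)) :
    IsLeast f.carrier c := by
  obtain ⟨b, hbJ, hb, hlim⟩ := hlim
  refine ⟨hc, fun s hs ↦ le_of_not_gt fun hsc ↦ ?_⟩
  obtain ⟨d, hd, hcd⟩ := (lt_isLUB_iff hb).1 (lt_of_isLUB_of_notMem hbJ hb hc)
  have hJ := Ico_subset_carrier hb hs
  have hdb : d < b := lt_of_isLUB_of_notMem hbJ hb hd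
  have hIoo : Ioo s d ⊆ Ico s b := fun t ht ↦ ⟨ht.1.le, ht.2.trans hdb⟩
  have hnear : f '' Ioo s d ∈ 𝓝 (f c) := image_mem_nhds_of_injOn H (Ioo_mem_nhds hsc hcd)
    (f.continuousOn.mono (hIoo.trans hJ)) (f.injOn.mono (hIoo.trans hJ))
  obtain ⟨t, ⟨u, hu, hut⟩, ht⟩ :=
    ((hlim.eventually_mem hnear).and (Ioo_mem_nhdsLT hdb)).exists
  have : u = t := f.injOn (hJ (hIoo hu)) (hJ ⟨(hsc.trans hcd).le.trans ht.1.le, ht.2⟩) hut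
  exact (hu.2.trans (this ▸ ht.1)).false

theorem nonempty_homeomorph_circle_of_hasRightLimit [T2Space X] [ConnectedSpace X] (H : Type*)
    [LinearOrder H] [TopologicalSpace H] [OrderTopology H] [ChartedSpace H X] (hf : IsMax f)
    (hx : f.HasRightLimit x) : Nonempty (X ≃ₜ Circle) := by
  obtain ⟨c, hc, rfl⟩ := mem_image_of_hasRightLimit hf hx
  have hleast := isLeast_of_hasRightLimit H hc hx
  obtain ⟨b, hbJ, hb, hlim⟩ := hx
  have hcb : c < b := lt_of_isLUB_of_notMem hbJ hb hc
  have hJ : f.carrier = Ico c b :=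
    (left_eq_inter.2 fun _ ht ↦ hleast.2 ht).trans (carrier_inter_Ici_eq_Ico hbJ hb hc)
  have heq : EqOn (Function.update f b (f c)) f (Ico c b) := fun t ht ↦
    Function.update_of_ne ht.2.ne _ _
  refine nonempty_homeomorph_circle_of_injOn_Ico H hcb (g := Function.update f b (f c)) ?_
    ((hJ ▸ f.injOn).congr heq.symm) ?_
  · refine continuousOn_update_iff.2 ⟨?_, fun _ ↦ ?_⟩ <;> rw [Icc_sdiff_right]
    · exact hJ ▸ f.continuousOn
    · exact hlim.mono_left (nhdsWithin_mono b fun t ht ↦ ht.2)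
  · rw [Function.update_self, Function.update_of_ne hcb.ne]

end RightLimit

section Closed

variable {X : Type*} [TopologicalSpace X] [SeparableSpace X] [T2Space X]
  [ConnectedSpace X] {f : Arc X} {c : ℝ}

theorem isClosed_image_inter_Ici (H : Type*) [LinearOrder H] [TopologicalSpace H]
    [OrderTopology H] [CompactIccSpace H] [ChartedSpace H X]
    (hX : IsEmpty (X ≃ₜ Circle)) (hf : IsMax f) (hc : c ∈ f.carrier) :
    IsClosed (f '' (f.carrier ∩ Ici c)) := by
  refine isClosed_of_closure_subset fun x hx ↦ ?_
  by_contra hx'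
  exact not_isEmpty_iff.2 (nonempty_homeomorph_circle_of_hasRightLimit H hf
    (hasRightLimit_of_mem_closure (hasBasis_nhds_finite_frontier H x) hc hx hx')) hX

theorem isClosed_image_inter_Iic (H : Type*) [LinearOrder H] [TopologicalSpace H]
    [OrderTopology H] [CompactIccSpace H] [ChartedSpace H X]
    (hX : IsEmpty (X ≃ₜ Circle)) (hf : IsMax f) (hc : c ∈ f.carrier) :
    IsClosed (f '' (f.carrier ∩ Iic c)) := by
  have hpre : Neg.neg ⁻¹' (f.carrier ∩ Iic c) = f.reverse.carrier ∩ Ici (-c) := by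
    rw [preimage_inter, ← Set.neg_Iic]; rfl
  rw [← image_preimage_eq (f.carrier ∩ Iic c) neg_surjective, image_image, hpre]
  exact isClosed_image_inter_Ici H hX (isMax_reverse hf) (by simpa [reverse] using hc)

theorem isClosed_image (H : Type*) [LinearOrder H] [TopologicalSpace H]
    [OrderTopology H] [CompactIccSpace H] [ChartedSpace H X]
    (hX : IsEmpty (X ≃ₜ Circle)) (hf : IsMax f) : IsClosed f.image := by
  obtain ⟨c, hc⟩ := carrier_nonempty_of_isMax hf
  have hunion : f.image = f '' (f.carrier ∩ Iic c) ∪ f '' (f.carrier ∩ Ici c) := by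
    rw [← image_union, ← inter_union_distrib_left, Iic_union_Ici, inter_univ, image]
  exact hunion ▸ (isClosed_image_inter_Iic H hX hf hc).union (isClosed_image_inter_Ici H hX hf hc)

end Closed

section Surjective

variable {X : Type*} [TopologicalSpace X] [SeparableSpace X] [ConnectedSpace X] {f : Arc X}

theorem image_eq_univ [ChartedSpace ℝ≥0 X] (hf : IsMax f) (hclosed : IsClosed f.image) :
    f.image = univ := by
  by_contra hne
  have hopen : ¬IsOpen f.image := fun hopen ↦
    hne (IsClopen.eq_univ ⟨hclosed, hopen⟩ ((carrier_nonempty_of_isMax hf).image f))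
  obtain ⟨p, hp, hnear⟩ : ∃ p ∈ f.image, f.image ∉ 𝓝 p := by
    simpa [isOpen_iff_mem_nhds] using hopen
  obtain ⟨q, hq, hinj, rfl, hq₁⟩ := exists_path_of_notMem_nhds hp hnear
  obtain ⟨s₀, hs₀, hexit, havoid⟩ := exists_last_exit hclosed zero_le_one hq hp hq₁
  have hsub : Icc s₀ 1 ⊆ Icc 0 1 := Icc_subset_Icc_left hs₀.1
  exact not_isMax_of_path ℝ≥0 hs₀.2 (hq.mono hsub) (hinj.mono hsub) hexit havoid hf

theorem nonempty_homeomorph_carrier [T2Space X] [ChartedSpace ℝ≥0 X]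
    (hX : IsEmpty (X ≃ₜ Circle)) (hf : IsMax f) : Nonempty (X ≃ₜ f.carrier) := by
  have hsurj : f '' f.carrier = univ := image_eq_univ hf (isClosed_image ℝ≥0 hX hf)
  have hbij : Function.Bijective (f.carrier.domRestrict f) :=
    ⟨injOn_iff_injective.1 f.injOn, range_eq_univ.1 ((range_domRestrict _ _).trans hsurj)⟩
  let E : f.carrier ≃ X := Equiv.ofBijective _ hbij
  have himage (B : Set ℝ) : E '' (Subtype.val ⁻¹' B) = f '' (f.carrier ∩ B) := by
    rw [← Subtype.image_preimage_coe, image_image]; rfl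
  have hinv : Continuous E.symm := continuous_symm_of_isClosed_image E
    (fun c ↦ (himage (Iic c)).symm ▸ isClosed_image_inter_Iic ℝ≥0 hX hf c.2)
    (fun c ↦ (himage (Ici c)).symm ▸ isClosed_image_inter_Ici ℝ≥0 hX hf c.2)
  exact ⟨⟨E.symm, hinv, f.continuousOn.domRestrict⟩⟩

end Surjective

end Arc

section Intervals

theorem mem_Icc_Ico_Ioc_Ioo_of_ordConnected {α : Type*} [ConditionallyCompleteLinearOrder α]
    {J : Set α} [J.OrdConnected] (hne : J.Nonempty) (hbelow : BddBelow J) (habove : BddAbove J) :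
    J ∈ ({Icc (sInf J) (sSup J), Ico (sInf J) (sSup J), Ioc (sInf J) (sSup J),
      Ioo (sInf J) (sSup J)} : Set (Set α)) := by
  refine mem_Icc_Ico_Ioc_Ioo_of_subset_of_subset (fun t ht ↦ ?_)
    (subset_Icc_csInf_csSup hbelow habove)
  obtain ⟨u, hu, hut⟩ := exists_lt_of_csInf_lt hne ht.1
  obtain ⟨v, hv, htv⟩ := exists_lt_of_lt_csSup hne ht.2
  exact OrdConnected.out ‹_› hu hv ⟨hut.le, htv.le⟩

/-- A bounded open interval is homeomorphic to the line, through the homeomorphism of a normed space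
with its balls. -/
noncomputable def homeomorphIoo {a b : ℝ} (hab : a < b) : Ioo a b ≃ₜ ℝ :=
  let e := OpenPartialHomeomorph.univBall ((a + b) / 2) ((b - a) / 2)
  have htarget : e.target = Ioo a b := by
    rw [OpenPartialHomeomorph.univBall_target _ (by linarith), Real.Ioo_eq_ball]
  (Homeomorph.setCongr htarget).symm.trans <| e.toHomeomorphSourceTarget.symm.trans <|
    (Homeomorph.setCongr (OpenPartialHomeomorph.univBall_source _ _)).trans (Homeomorph.Set.univ ℝ)

/-- A bounded half-open interval is homeomorphic to the half-line, through the ratio of the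
distances to the end points. -/
noncomputable def homeomorphIco {a b : ℝ} (hab : a < b) : Ico a b ≃ₜ Ici (0 : ℝ) where
  toFun t := ⟨(t - a) / (b - t), div_nonneg (sub_nonneg.2 t.2.1) (sub_pos.2 t.2.2).le⟩
  invFun s := ⟨(a + s * b) / (1 + s), by
    have hs : (0 : ℝ) ≤ s := s.2
    constructor
    · rw [le_div_iff₀ (by positivity)]; nlinarith
    · rw [div_lt_iff₀ (by positivity)]; nlinarith⟩
  left_inv t := by
    have hb : b - t ≠ 0 := (sub_pos.2 t.2.2).ne'
    have hsum : 1 + (t - a) / (b - t) ≠ 0 :=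
      (add_pos_of_pos_of_nonneg one_pos (div_nonneg (sub_nonneg.2 t.2.1) (sub_pos.2 t.2.2).le)).ne'
    refine Subtype.ext ((div_eq_iff hsum).2 ?_)
    field_simp
    ring
  right_inv s := by
    have hs : 1 + (s : ℝ) ≠ 0 := (add_pos_of_pos_of_nonneg one_pos s.2).ne'
    have hsub : b - (a + s * b) / (1 + s) = (b - a) / (1 + s) := by field_simp; ring
    refine Subtype.ext ?_
    simp only [hsub]
    rw [div_eq_iff (div_ne_zero (sub_pos.2 hab).ne' hs)]
    field_simp
    ring
  continuous_toFun := by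
    refine Continuous.subtype_mk (Continuous.div₀ (by fun_prop) (by fun_prop) fun t ↦ ?_) _
    exact (sub_pos.2 t.2.2).ne'
  continuous_invFun := by
    refine Continuous.subtype_mk (Continuous.div₀ (by fun_prop) (by fun_prop) fun s ↦ ?_) _
    exact (add_pos_of_pos_of_nonneg one_pos s.2).ne'

/-- The mirror image of `homeomorphIco`. -/
noncomputable def homeomorphIoc {a b : ℝ} (hab : a < b) : Ioc a b ≃ₜ Ici (0 : ℝ) :=
  ((Homeomorph.neg ℝ).subtype (q := (· ∈ Ico (-b) (-a))) fun t ↦ by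
    simp [and_comm]).trans (homeomorphIco (neg_lt_neg hab))

theorem nonempty_homeomorph_of_ordConnected {J : Set ℝ} [J.OrdConnected] (hJ : J.Nontrivial)
    (hbelow : BddBelow J) (habove : BddAbove J) :
    Nonempty (J ≃ₜ ℝ) ∨ Nonempty (J ≃ₜ Ici (0 : ℝ)) ∨ Nonempty (J ≃ₜ Icc (0 : ℝ) 1) := by
  have hlt : sInf J < sSup J := by
    obtain ⟨s, hs, t, ht, hst⟩ := hJ.exists_lt
    exact (csInf_le hbelow hs).trans_lt (hst.trans_le (le_csSup habove ht))
  obtain h | h | h | h := mem_Icc_Ico_Ioc_Ioo_of_ordConnected hJ.nonempty hbelow habove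
  · exact .inr (.inr ⟨(Homeomorph.setCongr h).trans (iccHomeoI _ _ hlt)⟩)
  · exact .inr (.inl ⟨(Homeomorph.setCongr h).trans (homeomorphIco hlt)⟩)
  · exact .inr (.inl ⟨(Homeomorph.setCongr h).trans (homeomorphIoc hlt)⟩)
  · exact .inl ⟨(Homeomorph.setCongr h).trans (homeomorphIoo hlt)⟩

end Intervals

section Exclusivity

theorem isEmpty_homeomorph_of_compactSpace_of_noncompactSpace {A B : Type*} [TopologicalSpace A]
    [TopologicalSpace B] [CompactSpace A] [NoncompactSpace B] : IsEmpty (A ≃ₜ B) :=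
  ⟨fun e ↦ not_compactSpace_iff.2 ‹_› e.compactSpace⟩

theorem noncompactSpace_Ici {α : Type*} [LinearOrder α] [TopologicalSpace α] [ClosedIciTopology α]
    [NoMaxOrder α] (a : α) : NoncompactSpace (Ici a) :=
  have : Nonempty α := ⟨a⟩
  not_compactSpace_iff.1 fun h ↦ not_bddAbove_Ici a (isCompact_iff_compactSpace.2 h).bddAbove

theorem isEmpty_real_homeomorph_Ici : IsEmpty (ℝ ≃ₜ Ici (0 : ℝ)) := by
  refine ⟨fun e ↦ ?_⟩
  have himage : (fun t ↦ (e t : ℝ)) '' univ ∈ 𝓝 (e (e.symm ⟨0, self_mem_Ici⟩) : ℝ) :=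
    image_mem_nhds_of_injOn ℝ univ_mem (by fun_prop)
      (Subtype.val_injective.comp e.injective).injOn
  rw [e.apply_symm_apply] at himage
  have hinterior : (0 : ℝ) ∈ interior (Ici 0) := mem_interior_iff_mem_nhds.2 <|
    mem_of_superset himage (image_subset_iff.2 fun t _ ↦ (e t).2)
  exact (mem_Ioi.1 (interior_Ici (a := (0 : ℝ)) ▸ hinterior)).false

theorem isEmpty_circle_homeomorph_Icc : IsEmpty (Circle ≃ₜ Icc (0 : ℝ) 1) := by
  refine ⟨fun e ↦ ?_⟩
  let E := (AddCircle.homeomorphCircle (one_ne_zero (α := ℝ))).trans e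
  have hE : IsHomeomorph fun z ↦ (E z : ℝ) :=
    isHomeomorph_of_continuous_injective_addCircle ℝ (by fun_prop)
      (Subtype.val_injective.comp E.injective)
  exact isEmpty_homeomorph_of_compactSpace_of_noncompactSpace.false hE.homeomorph

theorem not_nonempty_homeomorph_and {X A B : Type*} [TopologicalSpace X] [TopologicalSpace A]
    [TopologicalSpace B] (h : IsEmpty (A ≃ₜ B)) : ¬(Nonempty (X ≃ₜ A) ∧ Nonempty (X ≃ₜ B)) :=
  fun ⟨⟨e⟩, ⟨e'⟩⟩ ↦ h.false (e.symm.trans e')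

end Exclusivity

section Classification

theorem nontrivial_of_chartedSpace (H : Type*) {X : Type*} [TopologicalSpace H] [T1Space H]
    [∀ y : H, NeBot (𝓝[≠] y)] [TopologicalSpace X] [ChartedSpace H X] [Nonempty X] :
    Nontrivial X := by
  obtain ⟨p⟩ := ‹Nonempty X›
  let e := chartAt H p
  have hinf : e.target.Infinite := infinite_of_mem_nhds (e p)
    (e.open_target.mem_nhds (e.map_source (mem_chart_source H p)))
  obtain ⟨y, hy, z, hz, hyz⟩ := hinf.nontrivial
  exact ⟨e.symm y, e.symm z, e.symm.injOn.ne hy hz hyz⟩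

/-- The half-space model of one-dimensional manifolds with boundary, as an ordered space. -/
noncomputable def euclideanHalfSpaceOneHomeomorph : EuclideanHalfSpace 1 ≃ₜ ℝ≥0 :=
  ((EuclideanSpace.equiv (Fin 1) ℝ).toHomeomorph.trans (Homeomorph.funUnique (Fin 1) ℝ)).subtype
    fun _ ↦ Iff.rfl

variable {X : Type*} [TopologicalSpace X] [T2Space X] [SeparableSpace X] [ConnectedSpace X]

theorem nonempty_homeomorph_of_chartedSpace_nnreal [ChartedSpace ℝ≥0 X] :
    Nonempty (X ≃ₜ ℝ) ∨ Nonempty (X ≃ₜ Circle) ∨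
      Nonempty (X ≃ₜ Ici (0 : ℝ)) ∨ Nonempty (X ≃ₜ Icc (0 : ℝ) 1) := by
  obtain hcircle | hcircle := isEmpty_or_nonempty (X ≃ₜ Circle)
  · obtain ⟨f, hf⟩ := Arc.exists_isMax (X := X)
    obtain ⟨e⟩ := Arc.nonempty_homeomorph_carrier hcircle hf
    have : Nontrivial X := nontrivial_of_chartedSpace ℝ≥0
    have hJ : f.carrier.Nontrivial := nontrivial_coe_sort.1 e.symm.toEquiv.nontrivial
    obtain ⟨⟨e'⟩⟩ | ⟨⟨e'⟩⟩ | ⟨⟨e'⟩⟩ :=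
      nonempty_homeomorph_of_ordConnected hJ f.bddBelow_carrier f.bddAbove_carrier
    · exact .inl ⟨e.trans e'⟩
    · exact .inr (.inr (.inl ⟨e.trans e'⟩))
    · exact .inr (.inr (.inr ⟨e.trans e'⟩))
  · exact .inr (.inl hcircle)

end Classification

end OneManifold

open OneManifold in
theorem stmt_7_general {X : Type*} [TopologicalSpace X] [T2Space X]
    [TopologicalSpace.SeparableSpace X] [ChartedSpace (EuclideanHalfSpace 1) X]
    [ConnectedSpace X] :
    (Nonempty (X ≃ₜ ℝ) ∨ Nonempty (X ≃ₜ Circle) ∨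
        Nonempty (X ≃ₜ (Set.Ici (0 : ℝ))) ∨ Nonempty (X ≃ₜ (Set.Icc (0 : ℝ) 1))) ∧
      ¬(Nonempty (X ≃ₜ ℝ) ∧ Nonempty (X ≃ₜ Circle)) ∧
      ¬(Nonempty (X ≃ₜ ℝ) ∧ Nonempty (X ≃ₜ (Set.Ici (0 : ℝ)))) ∧
      ¬(Nonempty (X ≃ₜ ℝ) ∧ Nonempty (X ≃ₜ (Set.Icc (0 : ℝ) 1))) ∧
      ¬(Nonempty (X ≃ₜ Circle) ∧ Nonempty (X ≃ₜ (Set.Ici (0 : ℝ)))) ∧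
      ¬(Nonempty (X ≃ₜ Circle) ∧ Nonempty (X ≃ₜ (Set.Icc (0 : ℝ) 1))) ∧
      ¬(Nonempty (X ≃ₜ (Set.Ici (0 : ℝ))) ∧ Nonempty (X ≃ₜ (Set.Icc (0 : ℝ) 1))) := by
  let _ : ChartedSpace NNReal (EuclideanHalfSpace 1) :=
    euclideanHalfSpaceOneHomeomorph.toOpenPartialHomeomorph.singletonChartedSpace rfl
  let _ : ChartedSpace NNReal X := ChartedSpace.comp NNReal (EuclideanHalfSpace 1) X
  have := noncompactSpace_Ici (0 : ℝ)
  refine ⟨nonempty_homeomorph_of_chartedSpace_nnreal, ?_, ?_, ?_, ?_, ?_, ?_⟩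
  · exact fun ⟨hℝ, hCircle⟩ ↦ not_nonempty_homeomorph_and
      isEmpty_homeomorph_of_compactSpace_of_noncompactSpace ⟨hCircle, hℝ⟩
  · exact not_nonempty_homeomorph_and isEmpty_real_homeomorph_Ici
  · exact fun ⟨hℝ, hIcc⟩ ↦ not_nonempty_homeomorph_and
      isEmpty_homeomorph_of_compactSpace_of_noncompactSpace ⟨hIcc, hℝ⟩
  · exact not_nonempty_homeomorph_and isEmpty_homeomorph_of_compactSpace_of_noncompactSpace
  · exact not_nonempty_homeomorph_and isEmpty_circle_homeomorph_Icc
  · exact fun ⟨hIci, hIcc⟩ ↦ not_nonempty_homeomorph_and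
      isEmpty_homeomorph_of_compactSpace_of_noncompactSpace ⟨hIcc, hIci⟩

/-- Every connected nonempty 1-dimensional topological manifold with boundary
(a second-countable Hausdorff space locally modelled on `[0,∞)`, i.e. charted in the
half-space `EuclideanHalfSpace 1`) is homeomorphic to exactly one of: `ℝ`, the circle `S¹`,
the half-line `[0,∞)`, or the closed interval `[0,1]`. -/
theorem stmt_7 {X : Type*} [TopologicalSpace X] [T2Space X] [SecondCountableTopology X]
    [ChartedSpace (EuclideanHalfSpace 1) X] [Nonempty X] [ConnectedSpace X] :
    (Nonempty (X ≃ₜ ℝ) ∨ Nonempty (X ≃ₜ Circle) ∨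
        Nonempty (X ≃ₜ (Set.Ici (0 : ℝ))) ∨ Nonempty (X ≃ₜ (Set.Icc (0 : ℝ) 1))) ∧
      ¬(Nonempty (X ≃ₜ ℝ) ∧ Nonempty (X ≃ₜ Circle)) ∧
      ¬(Nonempty (X ≃ₜ ℝ) ∧ Nonempty (X ≃ₜ (Set.Ici (0 : ℝ)))) ∧
      ¬(Nonempty (X ≃ₜ ℝ) ∧ Nonempty (X ≃ₜ (Set.Icc (0 : ℝ) 1))) ∧
      ¬(Nonempty (X ≃ₜ Circle) ∧ Nonempty (X ≃ₜ (Set.Ici (0 : ℝ)))) ∧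
      ¬(Nonempty (X ≃ₜ Circle) ∧ Nonempty (X ≃ₜ (Set.Icc (0 : ℝ) 1))) ∧
      ¬(Nonempty (X ≃ₜ (Set.Ici (0 : ℝ))) ∧ Nonempty (X ≃ₜ (Set.Icc (0 : ℝ) 1))) :=
  stmt_7_general
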